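/- Let k > 0, C⊥ > 0, L > 0, β ∈ ℝ, ν₀ ∈ ℂ, and let W, F : ℝ × ℝ² × ℝ² → ℂ, (z, x⊥, p⊥) ↦ W(z,x⊥,p⊥), be smooth functions satisfying for all (z,x⊥,p⊥) the paraxial boundary-layer equation ∂_z W + p⊥·∇_{x⊥}W + iν₀W − F = (C⊥/(4k)) (∇_{p⊥} − iβx⊥)·(∇_{p⊥} − iβx⊥) W. Set ℓ_c = 2 k⁻¹ (L C⊥)^{−1/2}, σ* = (1/2) L^{3/2} C⊥^{1/2}, β̃ = β/β_c with β_c = 4 k⁻¹ C⊥⁻¹ L⁻², and define W̃(z̃, x̃, p̃) = W(Lk z̃, σ* k x̃, p̃/(k ℓ_c)) and F̃ likewise. Then W̃ satisfies for all (z̃, x̃, p̃) the normalized form ∂_z̃ W̃ + p̃·∇_x̃ W̃ + iLkν₀ W̃ − Lk F̃ = (∇_p̃ − iβ̃x̃)·(∇_p̃ − iβ̃x̃) W̃. (Thus the transverse spatial spread, transverse coherence length, and coherence bandwidth of the boundary layer scale as σ* ∼ L^{3/2}C⊥^{1/2}, ℓ_c ∼ k⁻¹L^{−1/2}C⊥^{−1/2},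 β_c ∼ k⁻¹C⊥⁻¹L⁻².) -/

import Mathlib

open MeasureTheory Complex Filter
open scoped RealInnerProductSpace Topology

noncomputable section

/-- The paraxial operator `(∇_{p⊥} − iβx⊥)·(∇_{p⊥} − iβx⊥)W
= Δ_{p⊥}W − 2iβ x⊥·∇_{p⊥}W − β²|x⊥|²W` acting on `W(z, x⊥, p⊥)`. -/
def parOp (β : ℝ)
    (W : ℝ → EuclideanSpace ℝ (Fin 2) → EuclideanSpace ℝ (Fin 2) → ℂ)
    (z : ℝ) (x p : EuclideanSpace ℝ (Fin 2)) : ℂ :=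
  (∑ j : Fin 2,
      fderiv ℝ (fun p' => fderiv ℝ (fun p'' => W z x p'') p' (EuclideanSpace.single j 1))
        p (EuclideanSpace.single j 1))
    - 2 * Complex.I * (β : ℂ) * fderiv ℝ (fun p' => W z x p') p x
    - ((β ^ 2 * ‖x‖ ^ 2 : ℝ) : ℂ) * W z x p

/-!
The operator `(∇ − ia)·(∇ − ia)` is homogeneous of degree two: composing with `p ↦ c p` turns `a`
into `c a` and produces a factor `c²`. The transport `∂_z + p·∇_x` picks up the factor `s` under
`z ↦ s z`, `p ↦ c p`, provided `x` is scaled by exactly `s c`. Hence a solution with diffusion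
coefficient `D` becomes one with coefficient `D'` as soon as `s D = c² D'`. For `s = Lk`,
`D = C⊥/(4k)` and `D' = 1` this forces `c = √(L C⊥)/2 = 1/(k ℓ_c)`, `s c = σ* k` and
`s c² = 1/β_c`.
-/

open Laplacian InnerProductSpace

section CovariantLaplacian

variable {E : Type*} [NormedAddCommGroup E] [InnerProductSpace ℝ E] [FiniteDimensional ℝ E]

theorem laplacian_comp_smul {G : Type*} [NormedAddCommGroup G] [NormedSpace ℝ G] {f : E → G}
    (hf : ContDiff ℝ 2 f) (c : ℝ) (p : E) :
    Δ (fun q => f (c • q)) p = c ^ 2 • Δ f (c • p) := by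
  simp only [laplacian_eq_iteratedFDeriv_stdOrthonormalBasis,
    iteratedFDeriv_comp_const_smul c hf, _root_.smul_apply, Finset.smul_sum]

theorem sum_fderiv_fderiv_single_eq_laplacian {ι G : Type*} [Fintype ι] [DecidableEq ι]
    [NormedAddCommGroup G] [NormedSpace ℝ G] {f : EuclideanSpace ℝ ι → G}
    (hf : ContDiff ℝ 2 f) (p : EuclideanSpace ℝ ι) :
    ∑ j, fderiv ℝ (fun q => fderiv ℝ f q (EuclideanSpace.single j 1)) p
      (EuclideanSpace.single j 1) = Δ f p := by
  have hf' : DifferentiableAt ℝ (fderiv ℝ f) p :=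
    (hf.fderiv_right (m := 1) le_rfl).differentiable one_ne_zero p
  simp [laplacian_eq_iteratedFDeriv_orthonormalBasis f (EuclideanSpace.basisFun ι ℝ),
    iteratedFDeriv_two_apply, fderiv_clm_apply hf' (differentiableAt_const _)]

/-- The expanded form of `(∇ − ia)·(∇ − ia) f` at `p`, for a constant vector `a`. The paraxial
operator is the case `a = βx`, acting in the momentum variable. -/
def covariantLaplacian (a : E) (f : E → ℂ) (p : E) : ℂ :=
  Δ f p - 2 * I * fderiv ℝ f p a - (‖a‖ ^ 2 : ℝ) * f p

theorem covariantLaplacian_comp_smul {f : E → ℂ} (hf : ContDiff ℝ 2 f) (c : ℝ) (a p : E) :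
    covariantLaplacian (c • a) (fun q => f (c • q)) p =
      (c : ℂ) ^ 2 * covariantLaplacian a f (c • p) := by
  have gradient_scaling : fderiv ℝ (fun q => f (c • q)) p = c • fderiv ℝ f (c • p) :=
    fderiv_comp_smul c
  simp only [covariantLaplacian, laplacian_comp_smul hf, gradient_scaling, _root_.smul_apply,
    map_smul, real_smul, norm_smul, mul_pow, Real.norm_eq_abs, sq_abs]
  push_cast
  ring

theorem parOp_eq_covariantLaplacian
    {W : ℝ → EuclideanSpace ℝ (Fin 2) → EuclideanSpace ℝ (Fin 2) → ℂ} (β z : ℝ)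
    (x p : EuclideanSpace ℝ (Fin 2)) (hW : ContDiff ℝ 2 (W z x)) :
    parOp β W z x p = covariantLaplacian (β • x) (W z x) p := by
  simp only [parOp, covariantLaplacian, sum_fderiv_fderiv_single_eq_laplacian hW, map_smul,
    real_smul, norm_smul, mul_pow, Real.norm_eq_abs, sq_abs]
  ring

end CovariantLaplacian

section Rescaling

/-- The function `W` in rescaled coordinates, `W̃(z, x, p) = W(s z, b x, c p)`. -/
def rescale {E G : Type*} [SMul ℝ E] (s b c : ℝ) (W : ℝ → E → E → G) :
    ℝ → E → E → G :=
  fun z x p => W (s * z) (b • x) (c • p)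

variable {E G : Type*} [NormedAddCommGroup E] [NormedSpace ℝ E] [NormedAddCommGroup G]
  [NormedSpace ℝ G]

/-- The paraxial transport operator `∂_z W + p·∇_x W`. -/
def paraxialTransport (W : ℝ → E → E → G) (z : ℝ) (x p : E) : G :=
  deriv (fun z' => W z' x p) z + fderiv ℝ (fun x' => W z x' p) x p

theorem paraxialTransport_rescale (W : ℝ → E → E → G) (s c z : ℝ) (x p : E) :
    paraxialTransport (rescale s (s * c) c W) z x p =
      s • paraxialTransport W (s * z) ((s * c) • x) (c • p) := by
  have deriv_scaling : deriv (fun z' => rescale s (s * c) c W z' x p) z =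
      s • deriv (fun z' => W z' ((s * c) • x) (c • p)) (s * z) :=
    deriv_comp_mul_left s (fun z' => W z' ((s * c) • x) (c • p)) z
  have gradient_scaling : fderiv ℝ (fun x' => rescale s (s * c) c W z x' p) x =
      (s * c) • fderiv ℝ (fun x' => W (s * z) x' (c • p)) ((s * c) • x) :=
    fderiv_comp_smul (f := fun x' => W (s * z) x' (c • p)) (s * c)
  simp only [paraxialTransport, deriv_scaling, gradient_scaling, _root_.smul_apply, map_smul,
    smul_add, smul_smul]

theorem contDiff_slice {W : ℝ → E → E → G} {n : WithTop ℕ∞}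
    (hW : ContDiff ℝ n fun q : ℝ × E × E => W q.1 q.2.1 q.2.2)
    (z : ℝ) (x : E) : ContDiff ℝ n (W z x) :=
  hW.comp (f := fun p => (z, x, p)) (by fun_prop)

theorem contDiff_rescale_slice {W : ℝ → E → E → G} {n : WithTop ℕ∞}
    (hW : ∀ z x, ContDiff ℝ n (W z x)) (s b c z : ℝ) (x : E) :
    ContDiff ℝ n (rescale s b c W z x) :=
  (hW (s * z) (b • x)).comp (contDiff_const_smul c)

end Rescaling

section ParaxialEquation

variable {E : Type*} [NormedAddCommGroup E] [InnerProductSpace ℝ E] [FiniteDimensional ℝ E]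

/-- `W` solves the paraxial equation
`∂_z W + p·∇_x W + iνW − F = D (∇_p − iβx)·(∇_p − iβx) W` with diffusion coefficient `D`,
over an arbitrary finite-dimensional transverse space. -/
def IsParaxialSolution (D β : ℝ) (ν : ℂ) (W F : ℝ → E → E → ℂ) : Prop :=
  ∀ z x p, paraxialTransport W z x p + I * ν * W z x p - F z x p =
    D * covariantLaplacian (β • x) (W z x) p

theorem isParaxialSolution_iff_parOp {D β : ℝ} {ν : ℂ}
    {W F : ℝ → EuclideanSpace ℝ (Fin 2) → EuclideanSpace ℝ (Fin 2) → ℂ}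
    (hW : ∀ z x, ContDiff ℝ 2 (W z x)) :
    IsParaxialSolution D β ν W F ↔ ∀ z x p,
      deriv (fun z' => W z' x p) z + fderiv ℝ (fun x' => W z x' p) x p
        + I * ν * W z x p - F z x p = D * parOp β W z x p := by
  simp only [IsParaxialSolution, paraxialTransport, parOp_eq_covariantLaplacian _ _ _ _ (hW _ _)]

theorem IsParaxialSolution.rescale {D D' β s c : ℝ} {ν : ℂ} {W F : ℝ → E → E → ℂ}
    (h : IsParaxialSolution D β ν W F) (hW : ∀ z x, ContDiff ℝ 2 (W z x))
    (hD : s * D = c ^ 2 * D') :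
    IsParaxialSolution D' (β * (s * c ^ 2)) (s * ν) (rescale s (s * c) c W)
      (fun z x p => s * rescale s (s * c) c F z x p) := by
  intro z x p
  have vector_scaling : (β * (s * c ^ 2)) • x = c • β • (s * c) • x := by
    simp only [smul_smul]
    ring_nf
  have operator_scaling :
      covariantLaplacian ((β * (s * c ^ 2)) • x) (_root_.rescale s (s * c) c W z x) p =
        (c : ℂ) ^ 2 * covariantLaplacian (β • (s * c) • x) (W (s * z) ((s * c) • x)) (c • p) := by
    rw [vector_scaling]
    exact covariantLaplacian_comp_smul (hW _ _) c _ p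
  have coefficient_scaling : (s : ℂ) * D = c ^ 2 * D' := mod_cast hD
  have equation := h (s * z) ((s * c) • x) (c • p)
  rw [paraxialTransport_rescale, operator_scaling, real_smul]
  simp only [_root_.rescale]
  linear_combination (s : ℂ) * equation +
    covariantLaplacian (β • (s * c) • x) (W (s * z) ((s * c) • x)) (c • p) * coefficient_scaling

end ParaxialEquation

section Scales

/-- The transverse coherence length `ℓ_c = 2 k⁻¹ (L C⊥)^{−1/2}`. -/
def coherenceLength (k CT L : ℝ) : ℝ := 2 * k⁻¹ * (√(L * CT))⁻¹

/-- The transverse spatial spread `σ* = (1/2) L^{3/2} C⊥^{1/2}`. -/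
def transverseSpread (CT L : ℝ) : ℝ := (1 / 2) * L ^ ((3 : ℝ) / 2) * √CT

/-- The coherence bandwidth `β_c = 4 k⁻¹ C⊥⁻¹ L⁻²`. -/
def coherenceBandwidth (k CT L : ℝ) : ℝ := 4 * k⁻¹ * CT⁻¹ * (L ^ 2)⁻¹

variable {k CT L : ℝ}

theorem inv_mul_coherenceLength (hk : k ≠ 0) :
    (k * coherenceLength k CT L)⁻¹ = √(L * CT) / 2 := by
  rw [coherenceLength, ← mul_assoc, mul_left_comm, mul_inv_cancel₀ hk, mul_one, mul_inv, inv_inv]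
  ring

theorem sq_inv_mul_coherenceLength (hk : k ≠ 0) (hLCT : 0 ≤ L * CT) :
    (k * coherenceLength k CT L)⁻¹ ^ 2 = L * CT / 4 := by
  rw [inv_mul_coherenceLength hk, div_pow, Real.sq_sqrt hLCT]
  norm_num

theorem transverseSpread_mul_eq (hk : k ≠ 0) (hL : 0 ≤ L) :
    transverseSpread CT L * k = L * k * (k * coherenceLength k CT L)⁻¹ := by
  have rpow_three_halves : L ^ ((3 : ℝ) / 2) = L * √L := by
    rw [show (3 : ℝ) / 2 = 1 + 1 / 2 by norm_num,
      Real.rpow_add_of_nonneg hL zero_le_one (by norm_num), Real.rpow_one, Real.sqrt_eq_rpow]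
  rw [inv_mul_coherenceLength hk, transverseSpread, rpow_three_halves, Real.sqrt_mul hL]
  ring

theorem inv_coherenceBandwidth (hk : k ≠ 0) (hLCT : 0 ≤ L * CT) :
    (coherenceBandwidth k CT L)⁻¹ = L * k * (k * coherenceLength k CT L)⁻¹ ^ 2 := by
  rw [sq_inv_mul_coherenceLength hk hLCT, coherenceBandwidth]
  simp only [mul_inv, inv_inv]
  ring

end Scales

theorem paraxial_boundary_layer_rescaling_general
    {E : Type*} [NormedAddCommGroup E] [InnerProductSpace ℝ E] [FiniteDimensional ℝ E]
    {k CT L β : ℝ} (hk : 0 < k) (hCT : 0 < CT) (hL : 0 < L) {ν₀ : ℂ} {W F : ℝ → E → E → ℂ}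
    (hW : ContDiff ℝ 2 fun q : ℝ × E × E => W q.1 q.2.1 q.2.2)
    (h : IsParaxialSolution (CT / (4 * k)) β ν₀ W F) :
    IsParaxialSolution 1 (β / coherenceBandwidth k CT L) ((L * k : ℝ) * ν₀)
      (rescale (L * k) (transverseSpread CT L * k) (k * coherenceLength k CT L)⁻¹ W)
      (fun z x p => (L * k : ℝ) *
        rescale (L * k) (transverseSpread CT L * k) (k * coherenceLength k CT L)⁻¹ F z x p) := by
  have hLCT : 0 ≤ L * CT := (mul_pos hL hCT).le
  have diffusion_normalized :
      L * k * (CT / (4 * k)) = (k * coherenceLength k CT L)⁻¹ ^ 2 * 1 := by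
    rw [sq_inv_mul_coherenceLength hk.ne' hLCT]
    field_simp
  rw [transverseSpread_mul_eq hk.ne' hL.le, div_eq_mul_inv, inv_coherenceBandwidth hk.ne' hLCT]
  exact h.rescale (contDiff_slice hW) diffusion_normalized

/-- Rescaling of the paraxial boundary-layer equation
`∂_z W + p⊥·∇_{x⊥}W + iν₀W − F = (C⊥/(4k))(∇_{p⊥} − iβx⊥)·(∇_{p⊥} − iβx⊥)W` with
`ℓ_c = 2k⁻¹(LC⊥)^{−1/2}`, `σ* = (1/2)L^{3/2}C⊥^{1/2}`, `β_c = 4k⁻¹C⊥⁻¹L⁻²`,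
`β̃ = β/β_c`, and `W̃(z̃,x̃,p̃) = W(Lk z̃, σ* k x̃, p̃/(kℓ_c))` (likewise `F̃`) yields the
normalized form
`∂_z̃W̃ + p̃·∇_x̃W̃ + iLkν₀W̃ − LkF̃ = (∇_p̃ − iβ̃x̃)·(∇_p̃ − iβ̃x̃)W̃`. -/
theorem paraxial_boundary_layer_rescaling
    (k CT L β : ℝ) (hk : 0 < k) (hCT : 0 < CT) (hL : 0 < L) (ν₀ : ℂ)
    (W F : ℝ → EuclideanSpace ℝ (Fin 2) → EuclideanSpace ℝ (Fin 2) → ℂ)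
    (hWsmooth : ContDiff ℝ (⊤ : ℕ∞)
      (fun q : ℝ × EuclideanSpace ℝ (Fin 2) × EuclideanSpace ℝ (Fin 2) => W q.1 q.2.1 q.2.2))
    (hFsmooth : ContDiff ℝ (⊤ : ℕ∞)
      (fun q : ℝ × EuclideanSpace ℝ (Fin 2) × EuclideanSpace ℝ (Fin 2) => F q.1 q.2.1 q.2.2))
    (heq : ∀ (z : ℝ) (x p : EuclideanSpace ℝ (Fin 2)),
      deriv (fun z' => W z' x p) z
          + fderiv ℝ (fun x' => W z x' p) x p
          + Complex.I * ν₀ * W z x p - F z x p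
        = ((CT / (4 * k) : ℝ) : ℂ) * parOp β W z x p)
    (ℓc σs βc βt : ℝ)
    (hℓc : ℓc = 2 * k⁻¹ * (Real.sqrt (L * CT))⁻¹)
    (hσs : σs = (1 / 2) * L ^ ((3 : ℝ) / 2) * Real.sqrt CT)
    (hβc : βc = 4 * k⁻¹ * CT⁻¹ * (L ^ 2)⁻¹)
    (hβt : βt = β / βc)
    (Wt Ft : ℝ → EuclideanSpace ℝ (Fin 2) → EuclideanSpace ℝ (Fin 2) → ℂ)
    (hWt : ∀ (zt : ℝ) (xt pt : EuclideanSpace ℝ (Fin 2)),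
      Wt zt xt pt = W (L * k * zt) ((σs * k) • xt) ((k * ℓc)⁻¹ • pt))
    (hFt : ∀ (zt : ℝ) (xt pt : EuclideanSpace ℝ (Fin 2)),
      Ft zt xt pt = F (L * k * zt) ((σs * k) • xt) ((k * ℓc)⁻¹ • pt)) :
    ∀ (zt : ℝ) (xt pt : EuclideanSpace ℝ (Fin 2)),
      deriv (fun z' => Wt z' xt pt) zt
          + fderiv ℝ (fun x' => Wt zt x' pt) xt pt
          + Complex.I * ((L * k : ℝ) : ℂ) * ν₀ * Wt zt xt pt
          - ((L * k : ℝ) : ℂ) * Ft zt xt pt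
        = parOp βt Wt zt xt pt := by
  have hW : ContDiff ℝ 2
      (fun q : ℝ × EuclideanSpace ℝ (Fin 2) × EuclideanSpace ℝ (Fin 2) => W q.1 q.2.1 q.2.2) :=
    hWsmooth.of_le (WithTop.coe_le_coe.2 le_top)
  obtain rfl : Wt = rescale (L * k) (σs * k) (k * ℓc)⁻¹ W :=
    funext fun zt => funext fun xt => funext (hWt zt xt)
  obtain rfl : Ft = rescale (L * k) (σs * k) (k * ℓc)⁻¹ F :=
    funext fun zt => funext fun xt => funext (hFt zt xt)
  obtain rfl : ℓc = coherenceLength k CT L := hℓc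
  obtain rfl : σs = transverseSpread CT L := hσs
  obtain rfl : βc = coherenceBandwidth k CT L := hβc
  subst hβt
  have hsol : IsParaxialSolution (CT / (4 * k)) β ν₀ W F :=
    (isParaxialSolution_iff_parOp (contDiff_slice hW)).2 heq
  simpa only [ofReal_one, one_mul, ← mul_assoc] using
    (isParaxialSolution_iff_parOp (contDiff_rescale_slice (contDiff_slice hW) _ _ _)).1
      (paraxial_boundary_layer_rescaling_general hk hCT hL hW hsol)
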